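/- arXiv:1909.04259 — 7 statements merged into one kernel-verified Lean document; each statement's English description precedes it below -/
import Mathlib

section
/- The entries of P†Q satisfy [P†Q]_{i,j} = 𝓡_p(−2Ĝ−i+j) for 1 ≤ j ≤ 2Ĝ and [P†Q]_{i,j} = 𝓡_p(2U+1−2Ĝ−i+j) for 2Ĝ < j ≤ 4Ĝ, and in every case the argument of 𝓡_p is a nonzero integer; consequently Σ_{i,j} |[P†Q]_{i,j}|² ≤ 4Ĝ·(2U+1)·max_{a ≠ 0} |𝓡_p(a)|², where the maximum is over nonzero integers a (equivalently over 1 ≤ |a| ≤ 2Ĝ+2U, since 𝓡_p(a) = 0 for |a| > 2Ĝ). -/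
open Complex Finset Matrix

/-- The correlation of two shifted copies of a sequence supported on `[-G, G]`, summed over a
window that contains the support of the first copy, is a value of the auto-correlation. -/
theorem sum_conj_shift_mul_shift_eq_autocorrelation (G N : ℕ) (p : ℤ → ℂ)
    (hp : ∀ g : ℤ, (G : ℤ) < |g| → p g = 0) (i : ℕ) (hi : 2 * G + i < N) (c : ℤ) :
    ∑ k : Fin N, (starRingEnd ℂ) (p (-(G : ℤ) + (k : ℤ) - (i : ℤ))) * p (c + (k : ℤ)) =
      ∑ g ∈ Finset.Icc (-(G : ℤ)) (G : ℤ),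
        p g * (starRingEnd ℂ) (p (g + (-(G : ℤ) - (i : ℤ) - c))) := by
  have hsupp : ∀ g : ℤ, p g ≠ 0 → -(G : ℤ) ≤ g ∧ g ≤ G := fun g hg =>
    abs_le.mp (not_lt.mp fun h => hg (hp g h))
  refine Finset.sum_bij_ne_zero (fun k _ _ => c + (k : ℤ)) ?_ ?_ ?_ ?_
  · intro k _ hk
    exact Finset.mem_Icc.mpr (hsupp _ (right_ne_zero_of_mul hk))
  · intro k _ _ l _ _ hkl
    ext
    simpa using hkl
  · intro g _ hg
    have hg' := hsupp _ ((map_ne_zero _).mp (right_ne_zero_of_mul hg))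
    have hk : c + (((g - c).toNat : ℕ) : ℤ) = g := by omega
    refine ⟨⟨(g - c).toNat, by omega⟩, Finset.mem_univ _, ?_, hk⟩
    dsimp only
    rw [hk, mul_comm]
    convert hg using 4
    omega
  · intro k _ _
    rw [mul_comm]
    congr 3
    ring

/-- The entries of `P†Q` are values of the aperiodic auto-correlation `𝓡_p` at nonzero
lags; hence the squared Frobenius norm of `P†Q` is at most
`4Ĝ·(2U+1)·max_{a≠0}|𝓡_p(a)|²`. -/
theorem stmt_8 (G U : ℕ) (hG : 1 ≤ G) (p : ℤ → ℂ)
    (hp : ∀ g : ℤ, (G : ℤ) < |g| → p g = 0)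
    (𝓡 : ℤ → ℂ)
    (h𝓡 : ∀ a : ℤ, 𝓡 a = ∑ g ∈ Finset.Icc (-(G : ℤ)) (G : ℤ), p g * (starRingEnd ℂ) (p (g + a)))
    (P : Matrix (Fin (2 * G + 2 * U + 1)) (Fin (2 * U + 1)) ℂ)
    (hP : ∀ i j, P i j = p (-(G : ℤ) + (i : ℤ) - (j : ℤ)))
    (Q : Matrix (Fin (2 * G + 2 * U + 1)) (Fin (4 * G)) ℂ)
    (hQ : ∀ i j, Q i j = if (j : ℕ) < 2 * G then p ((G : ℤ) + (i : ℤ) - (j : ℤ))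
      else p ((G : ℤ) - 2 * (U : ℤ) - 1 + (i : ℤ) - (j : ℤ)))
    (C : ℝ)
    (hC : IsGreatest { z : ℝ | ∃ a : ℤ, a ≠ 0 ∧ z = ‖𝓡 a‖ ^ 2 } C) :
    (∀ (i : Fin (2 * U + 1)) (j : Fin (4 * G)), (j : ℕ) < 2 * G →
      (Pᴴ * Q) i j = 𝓡 (-2 * (G : ℤ) - (i : ℤ) + (j : ℤ))) ∧
    (∀ (i : Fin (2 * U + 1)) (j : Fin (4 * G)), 2 * G ≤ (j : ℕ) →
      (Pᴴ * Q) i j = 𝓡 (2 * (U : ℤ) + 1 - 2 * (G : ℤ) - (i : ℤ) + (j : ℤ))) ∧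
    (∀ (i : Fin (2 * U + 1)) (j : Fin (4 * G)),
      ((j : ℕ) < 2 * G → (-2 * (G : ℤ) - (i : ℤ) + (j : ℤ)) ≠ 0) ∧
      (2 * G ≤ (j : ℕ) → (2 * (U : ℤ) + 1 - 2 * (G : ℤ) - (i : ℤ) + (j : ℤ)) ≠ 0)) ∧
    (∑ i : Fin (2 * U + 1), ∑ j : Fin (4 * G), ‖(Pᴴ * Q) i j‖ ^ 2) ≤
      4 * (G : ℝ) * (2 * (U : ℝ) + 1) * C := by
  have entry_left : ∀ (i : Fin (2 * U + 1)) (j : Fin (4 * G)), (j : ℕ) < 2 * G →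
      (Pᴴ * Q) i j = 𝓡 (-2 * (G : ℤ) - (i : ℤ) + (j : ℤ)) := by
    intro i j hj
    have h := sum_conj_shift_mul_shift_eq_autocorrelation G (2 * G + 2 * U + 1) p hp i
      (by omega) ((G : ℤ) - (j : ℤ))
    rw [show -(G : ℤ) - (i : ℤ) - ((G : ℤ) - (j : ℤ)) = -2 * (G : ℤ) - (i : ℤ) + (j : ℤ) by ring,
      ← h𝓡] at h
    rw [← h, Matrix.mul_apply]
    refine Finset.sum_congr rfl fun k _ => ?_
    rw [Matrix.conjTranspose_apply, hP, hQ, if_pos hj, sub_add_eq_add_sub]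
    rfl
  have entry_right : ∀ (i : Fin (2 * U + 1)) (j : Fin (4 * G)), 2 * G ≤ (j : ℕ) →
      (Pᴴ * Q) i j = 𝓡 (2 * (U : ℤ) + 1 - 2 * (G : ℤ) - (i : ℤ) + (j : ℤ)) := by
    intro i j hj
    have h := sum_conj_shift_mul_shift_eq_autocorrelation G (2 * G + 2 * U + 1) p hp i
      (by omega) ((G : ℤ) - 2 * (U : ℤ) - 1 - (j : ℤ))
    rw [show -(G : ℤ) - (i : ℤ) - ((G : ℤ) - 2 * (U : ℤ) - 1 - (j : ℤ)) =
      2 * (U : ℤ) + 1 - 2 * (G : ℤ) - (i : ℤ) + (j : ℤ) by ring, ← h𝓡] at h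
    rw [← h, Matrix.mul_apply]
    refine Finset.sum_congr rfl fun k _ => ?_
    rw [Matrix.conjTranspose_apply, hP, hQ, if_neg hj.not_gt, sub_add_eq_add_sub _ (j : ℤ)]
    rfl
  have lag_ne_zero : ∀ (i : Fin (2 * U + 1)) (j : Fin (4 * G)),
      ((j : ℕ) < 2 * G → (-2 * (G : ℤ) - (i : ℤ) + (j : ℤ)) ≠ 0) ∧
      (2 * G ≤ (j : ℕ) → (2 * (U : ℤ) + 1 - 2 * (G : ℤ) - (i : ℤ) + (j : ℤ)) ≠ 0) := by
    intro i j
    constructor <;> intro hj <;> omega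
  refine ⟨entry_left, entry_right, lag_ne_zero, ?_⟩
  have entry_le : ∀ (i : Fin (2 * U + 1)) (j : Fin (4 * G)), ‖(Pᴴ * Q) i j‖ ^ 2 ≤ C := by
    intro i j
    rcases lt_or_ge (j : ℕ) (2 * G) with hj | hj
    · exact hC.2 ⟨_, (lag_ne_zero i j).1 hj, by rw [entry_left i j hj]⟩
    · exact hC.2 ⟨_, (lag_ne_zero i j).2 hj, by rw [entry_right i j hj]⟩
  calc ∑ i : Fin (2 * U + 1), ∑ j : Fin (4 * G), ‖(Pᴴ * Q) i j‖ ^ 2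
      ≤ ∑ _i : Fin (2 * U + 1), ∑ _j : Fin (4 * G), C :=
        Finset.sum_le_sum fun i _ => Finset.sum_le_sum fun j _ => entry_le i j
    _ = 4 * (G : ℝ) * (2 * (U : ℝ) + 1) * C := by
        simp only [Finset.sum_const, Finset.card_univ, Fintype.card_fin, nsmul_eq_mul]
        push_cast
        ring
end

section
/- Let K ≥ 2 be an integer, 0 < r < 1, and let k1, k2 be integers with k1 ≢ k2 (mod K). Then Δ(k1,k2) = (1 − r^K) / (K²·(1 − ρ_{k2}/ρ_{k1})) · [ 1/(1 − ρ_{k2}) − 1/(1 − conj(ρ_{k2})) + 1/(1 − conj(ρ_{k1})) − 1/(1 − ρ_{k1}) ]. -/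
open Complex Finset

section WienerCorrelation

variable {F : Type*} [Field F] {r a b : F} {K : ℕ}

theorem sum_range_succ_pow_natAbs_mul_pow (h : b ≠ r) (m : ℕ) :
    ∑ n ∈ range (m + 1), r ^ ((m : ℤ) - (n : ℤ)).natAbs * b ^ n
      = (b ^ (m + 1) - r ^ (m + 1)) / (b - r) := by
  have h' : b - r ≠ 0 := sub_ne_zero.mpr h
  rw [← (Commute.all b r).geom_sum₂_mul, mul_div_cancel_right₀ _ h']
  refine sum_congr rfl fun n hn => ?_
  have hn := mem_range.mp hn
  rw [mul_comm, show ((m : ℤ) - (n : ℤ)).natAbs = m + 1 - 1 - n by omega]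

theorem sum_range_pow_natAbs_mul_pow (h : b ≠ r) (h1 : 1 - r * b ≠ 0) (m d : ℕ) :
    ∑ n ∈ range (m + 1 + d), r ^ ((m : ℤ) - (n : ℤ)).natAbs * b ^ n
      = (b ^ (m + 1) - r ^ (m + 1)) / (b - r)
        + (r * b ^ (m + 1) - r ^ (d + 1) * b ^ (m + 1 + d)) / (1 - r * b) := by
  induction d with
  | zero => simp [sum_range_succ_pow_natAbs_mul_pow h]
  | succ d ih =>
    rw [← add_assoc, sum_range_succ, ih,
      show ((m : ℤ) - ((m + 1 + d : ℕ) : ℤ)).natAbs = d + 1 by omega, add_assoc]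
    congr 1
    field_simp
    ring

/-- The double sum of `r ^ |m - n|` against two distinct characters of order dividing `K`. -/
theorem sum_sum_pow_natAbs_mul_inv_pow_mul_pow (hr : r ≠ 0) (ha : a ≠ 0) (hb : b ≠ 0)
    (haK : a ^ K = 1) (hbK : b ^ K = 1) (hab : a ≠ b) (har : a ≠ r) (hbr : b ≠ r)
    (har1 : 1 - r * a ≠ 0) (hbr1 : 1 - r * b ≠ 0) :
    ∑ m ∈ range K, ∑ n ∈ range K,
        r ^ ((m : ℤ) - (n : ℤ)).natAbs * (a⁻¹ ^ m * b ^ n)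
      = (1 - r ^ K) / (1 - b / a) *
        (1 / (1 - r * b) - 1 / (1 - r * b⁻¹) + 1 / (1 - r * a⁻¹) - 1 / (1 - r * a)) := by
  have hbr' : b - r ≠ 0 := sub_ne_zero.mpr hbr
  have har' : a - r ≠ 0 := sub_ne_zero.mpr har
  have hab' : a - b ≠ 0 := sub_ne_zero.mpr hab
  have hinner : ∀ m ∈ range K, ∑ n ∈ range K,
      r ^ ((m : ℤ) - (n : ℤ)).natAbs * (a⁻¹ ^ m * b ^ n)
      = (b / (b - r) + r * b / (1 - r * b)) * (b / a) ^ m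
        - r / (b - r) * (r / a) ^ m - r ^ K / (1 - r * b) * ((r * a)⁻¹) ^ m := by
    intro m hm
    obtain ⟨d, hd⟩ := Nat.exists_eq_add_of_le (Nat.succ_le_of_lt (mem_range.mp hm))
    rw [Nat.succ_eq_add_one] at hd
    have hsum := sum_range_pow_natAbs_mul_pow hbr hbr1 m d
    rw [← hd, hbK] at hsum
    simp_rw [mul_left_comm _ (a⁻¹ ^ m)]
    rw [← mul_sum, hsum, show r ^ K = r ^ (d + 1) * r ^ m by rw [hd]; ring]
    simp only [div_pow, inv_pow, mul_pow]
    field_simp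
    ring
  have hq1 : b / a ≠ 1 := fun h => hab ((div_eq_one_iff_eq ha).mp h).symm
  have hq2 : r / a ≠ 1 := fun h => har ((div_eq_one_iff_eq ha).mp h).symm
  have hq3 : (r * a)⁻¹ ≠ 1 := fun h => har1 (by rw [inv_eq_one.mp h, sub_self])
  have hrK : r ^ K ≠ 0 := pow_ne_zero _ hr
  rw [sum_congr rfl hinner, sum_sub_distrib, sum_sub_distrib, ← mul_sum, ← mul_sum, ← mul_sum,
    geom_sum_eq hq1, geom_sum_eq hq2, geom_sum_eq hq3]
  simp only [div_pow, inv_pow, mul_pow, haK, hbK]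
  have e1 : r / a - 1 = -((a - r) / a) := by field_simp; ring
  have e2 : (r * a)⁻¹ - 1 = (1 - r * a) / (r * a) := by field_simp
  have e3 : 1 - b / a = (a - b) / a := by field_simp
  have e4 : 1 - r * b⁻¹ = (b - r) / b := by field_simp
  have e5 : 1 - r * a⁻¹ = (a - r) / a := by field_simp
  rw [e1, e2, e3, e4, e5]
  have hbr1' : 1 - b * r ≠ 0 := by rwa [mul_comm]
  generalize r ^ K = q at hrK ⊢
  field_simp
  ring

end WienerCorrelation

theorem Complex.exp_two_pi_mul_I_mul_int_div_eq_iff {K : ℕ} (hK : K ≠ 0) (k l : ℤ) :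
    exp (2 * (Real.pi : ℂ) * I * k / K) = exp (2 * (Real.pi : ℂ) * I * l / K) ↔
      (k : ZMod K) = l := by
  have hK' : (K : ℂ) ≠ 0 := Nat.cast_ne_zero.mpr hK
  rw [exp_eq_exp_iff_exists_int, ZMod.intCast_eq_intCast_iff_dvd_sub, dvd_sub_comm]
  refine exists_congr fun n => ?_
  have hpi := two_pi_I_ne_zero
  rw [show 2 * (Real.pi : ℂ) * I * l / K + n * (2 * Real.pi * I)
    = 2 * (Real.pi : ℂ) * I * ((l + K * n) / K) by field_simp, mul_div_assoc,
    mul_right_inj' hpi, div_left_inj' hK', sub_eq_iff_eq_add']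
  norm_cast

/-- Closed form of the off-diagonal correlation `Δ(k1,k2)` of the nDFT coefficients of
the Wiener phase-noise process, for `k1 ≢ k2 (mod K)`. -/
theorem stmt_10 (K : ℕ) (hK : 2 ≤ K) (r : ℝ) (hr0 : 0 < r) (hr1 : r < 1)
    (ρ : ℤ → ℂ)
    (hρ : ∀ k : ℤ, ρ k = (r : ℂ) * Complex.exp (2 * (Real.pi : ℂ) * Complex.I * (k : ℂ) / (K : ℂ)))
    (Δ : ℤ → ℤ → ℂ)
    (hΔ : ∀ k1 k2 : ℤ, Δ k1 k2 =
      (1 / (K : ℂ) ^ 2) * ∑ m ∈ Finset.range K, ∑ n ∈ Finset.range K,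
        (r : ℂ) ^ (((m : ℤ) - (n : ℤ)).natAbs) *
          Complex.exp (-2 * (Real.pi : ℂ) * Complex.I *
            (((k1 * m - k2 * n : ℤ)) : ℂ) / (K : ℂ)))
    (k1 k2 : ℤ) (hne : (k1 : ZMod K) ≠ (k2 : ZMod K)) :
    Δ k1 k2 = (1 - (r : ℂ) ^ K) / ((K : ℂ) ^ 2 * (1 - ρ k2 / ρ k1)) *
      (1 / (1 - ρ k2) - 1 / (1 - (starRingEnd ℂ) (ρ k2))
        + 1 / (1 - (starRingEnd ℂ) (ρ k1)) - 1 / (1 - ρ k1)) := by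
  have hK0 : K ≠ 0 := by omega
  have hKC : (K : ℂ) ≠ 0 := Nat.cast_ne_zero.mpr hK0
  have hrC : (r : ℂ) ≠ 0 := ofReal_ne_zero.mpr hr0.ne'
  set e : ℤ → ℂ := fun k => exp (2 * (Real.pi : ℂ) * I * k / K) with he
  have hρe (k : ℤ) : ρ k = r * e k := hρ k
  have he0 (k : ℤ) : e k ≠ 0 := exp_ne_zero _
  have heK (k : ℤ) : e k ^ K = 1 := by
    rw [he, ← exp_nat_mul, mul_div_cancel₀ _ hKC, mul_comm, exp_int_mul_two_pi_mul_I]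
  have hnorm (k : ℤ) : ‖e k‖ = 1 := norm_eq_one_of_pow_eq_one (heK k) hK0
  have hconj (k : ℤ) : (starRingEnd ℂ) (ρ k) = r * (e k)⁻¹ := by
    rw [hρe, map_mul, conj_ofReal, inv_eq_conj (hnorm k)]
  have her (k : ℤ) : e k ≠ r := fun h => by
    have := hnorm k
    rw [h, norm_real, Real.norm_of_nonneg hr0.le] at this
    exact hr1.ne this
  have her1 (k : ℤ) : 1 - (r : ℂ) * e k ≠ 0 := fun h => by
    have := congrArg norm (sub_eq_zero.mp h)
    rw [norm_mul, hnorm, norm_real, Real.norm_of_nonneg hr0.le, norm_one, mul_one] at this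
    exact hr1.ne' this
  have hne' : e k1 ≠ e k2 := fun h =>
    hne ((exp_two_pi_mul_I_mul_int_div_eq_iff hK0 k1 k2).mp h)
  have hterm (m n : ℕ) : exp (-2 * (Real.pi : ℂ) * I * ((k1 * m - k2 * n : ℤ) : ℂ) / K)
      = (e k1)⁻¹ ^ m * e k2 ^ n := by
    rw [he, ← exp_neg, ← exp_nat_mul, ← exp_nat_mul, ← exp_add]
    push_cast
    ring_nf
  simp_rw [hΔ, hterm, hconj, hρe]
  rw [sum_sum_pow_natAbs_mul_inv_pow_mul_pow hrC (he0 k1) (he0 k2) (heK k1) (heK k2) hne'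
    (her k1) (her k2) (her1 k1) (her1 k2), mul_div_mul_left _ _ hrC, ← mul_assoc,
    div_mul_div_comm, one_mul]
end

section
/- Let K ≥ 1 be an integer, 0 < r < 1, and let k be an integer. Then Δ(k) = (1/K²)·[ K·(1 − r²) / ((1 − conj(ρ_k))·(1 − ρ_k)) − conj(ρ_k)·(1 − r^K) / (1 − conj(ρ_k))² − ρ_k·(1 − r^K) / (1 − ρ_k)² ]. -/
open Complex Finset

/-- The geometric sum `x + x² + ⋯ + x ^ N`, in reversed order. -/
theorem sum_range_pow_sub {F : Type*} [Field F] {x : F} (hx : 1 - x ≠ 0) (N : ℕ) :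
    ∑ n ∈ Finset.range N, x ^ (N - n) = x * (1 - x ^ N) / (1 - x) := by
  induction N with
  | zero => simp
  | succ N ih =>
    rw [Finset.sum_range_succ']
    simp only [Nat.add_sub_add_right, Nat.sub_zero]
    rw [ih]
    field_simp
    ring

/-- The sum of the entries of the Toeplitz matrix with symbol powers `a ^ d` above and `b ^ d`
below the diagonal. At most one of the truncated differences is nonzero. -/
theorem sum_sum_range_pow_sub_mul_pow_sub {F : Type*} [Field F] {a b : F}
    (ha : 1 - a ≠ 0) (hb : 1 - b ≠ 0) (N : ℕ) :
    ∑ m ∈ Finset.range N, ∑ n ∈ Finset.range N, a ^ (n - m) * b ^ (m - n) =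
      N * (1 - a * b) / ((1 - b) * (1 - a)) - b * (1 - b ^ N) / (1 - b) ^ 2
        - a * (1 - a ^ N) / (1 - a) ^ 2 := by
  induction N with
  | zero => simp
  | succ N ih =>
    have hcol : ∑ m ∈ Finset.range N, a ^ (N - m) * b ^ (m - N) =
        a * (1 - a ^ N) / (1 - a) := by
      rw [← sum_range_pow_sub ha]
      refine Finset.sum_congr rfl fun m hm => ?_
      rw [Nat.sub_eq_zero_of_le (Finset.mem_range.mp hm).le, pow_zero, mul_one]
    have hrow : ∑ n ∈ Finset.range N, a ^ (n - N) * b ^ (N - n) =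
        b * (1 - b ^ N) / (1 - b) := by
      rw [← sum_range_pow_sub hb]
      refine Finset.sum_congr rfl fun n hn => ?_
      rw [Nat.sub_eq_zero_of_le (Finset.mem_range.mp hn).le, pow_zero, one_mul]
    simp only [Finset.sum_range_succ, Finset.sum_add_distrib, ih, hcol, hrow, Nat.sub_self,
      pow_zero, mul_one]
    push_cast
    field_simp
    ring

/-- Closed form of the diagonal correlation `Δ(k)` of the nDFT coefficients of the
Wiener phase-noise process. -/
theorem stmt_11 (K : ℕ) (hK : 1 ≤ K) (r : ℝ) (hr0 : 0 < r) (hr1 : r < 1)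
    (ρ : ℤ → ℂ)
    (hρ : ∀ k : ℤ, ρ k = (r : ℂ) * Complex.exp (2 * (Real.pi : ℂ) * Complex.I * (k : ℂ) / (K : ℂ)))
    (Δ : ℤ → ℤ → ℂ)
    (hΔ : ∀ k1 k2 : ℤ, Δ k1 k2 =
      (1 / (K : ℂ) ^ 2) * ∑ m ∈ Finset.range K, ∑ n ∈ Finset.range K,
        (r : ℂ) ^ (((m : ℤ) - (n : ℤ)).natAbs) *
          Complex.exp (-2 * (Real.pi : ℂ) * Complex.I *
            (((k1 * m - k2 * n : ℤ)) : ℂ) / (K : ℂ)))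
    (k : ℤ) :
    Δ k k = (1 / (K : ℂ) ^ 2) *
      ((K : ℂ) * (1 - (r : ℂ) ^ 2) / ((1 - (starRingEnd ℂ) (ρ k)) * (1 - ρ k))
        - (starRingEnd ℂ) (ρ k) * (1 - (r : ℂ) ^ K) / (1 - (starRingEnd ℂ) (ρ k)) ^ 2
        - ρ k * (1 - (r : ℂ) ^ K) / (1 - ρ k) ^ 2) := by
  have hK0 : (K : ℂ) ≠ 0 := Nat.cast_ne_zero.mpr (by omega)
  set w : ℂ := Complex.exp (2 * (Real.pi : ℂ) * Complex.I * (k : ℂ) / (K : ℂ)) with hw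
  have hw0 : w ≠ 0 := Complex.exp_ne_zero _
  have hconj_w : (starRingEnd ℂ) w = w⁻¹ := by
    rw [hw, ← Complex.exp_conj, ← Complex.exp_neg]
    congr 1
    simp [neg_div, Complex.conj_ofNat]
  have hwK : w ^ K = 1 := by
    rw [hw, ← Complex.exp_nat_mul, Complex.exp_eq_one_iff]
    exact ⟨k, by field_simp⟩
  have hρk : ρ k = r * w := hρ k
  have hconj : (starRingEnd ℂ) (ρ k) = r * w⁻¹ := by
    rw [hρk, map_mul, Complex.conj_ofReal, hconj_w]
  have hnorm_w : ‖w‖ = 1 := Complex.norm_eq_one_of_pow_eq_one hwK (by omega)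
  have ha : 1 - (r : ℂ) * w ≠ 0 := by
    intro h
    have := congrArg norm (sub_eq_zero.mp h)
    rw [norm_mul, hnorm_w, Complex.norm_real, Real.norm_of_nonneg hr0.le, norm_one] at this
    linarith
  have hb : 1 - (r : ℂ) * w⁻¹ ≠ 0 := by
    intro h
    have := congrArg norm (sub_eq_zero.mp h)
    rw [norm_mul, norm_inv, hnorm_w, Complex.norm_real, Real.norm_of_nonneg hr0.le,
      norm_one] at this
    linarith
  have hterm : ∀ m n : ℕ, (r : ℂ) ^ (((m : ℤ) - (n : ℤ)).natAbs) *
      Complex.exp (-2 * (Real.pi : ℂ) * Complex.I * (((k * m - k * n : ℤ)) : ℂ) / (K : ℂ)) =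
      (r * w) ^ (n - m) * (r * w⁻¹) ^ (m - n) := by
    intro m n
    have hexp : Complex.exp (-2 * (Real.pi : ℂ) * Complex.I *
        (((k * m - k * n : ℤ)) : ℂ) / (K : ℂ)) = w ^ ((n : ℤ) - m) := by
      rw [hw, ← Complex.exp_int_mul]
      congr 1
      push_cast
      ring
    rw [hexp]
    rcases le_total m n with h | h
    · obtain ⟨d, rfl⟩ := Nat.exists_eq_add_of_le h
      simp [mul_pow]
    · obtain ⟨d, rfl⟩ := Nat.exists_eq_add_of_le h
      simp [mul_pow]
  have hab : (r : ℂ) * w * (r * w⁻¹) = r ^ 2 := by field_simp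
  rw [hΔ, hconj, hρk]
  simp only [hterm]
  rw [sum_sum_range_pow_sub_mul_pow_sub ha hb, hab, mul_pow, mul_pow, inv_pow, hwK, inv_one,
    mul_one]
end

section
/- Let K ≥ 1 be an integer and 0 < r < 1. Define F : ℝ → ℝ by F(x) = (1 − r²) / (K·(1 + r² − 2rx)) + 2r·(1 − r^K)·(2r − (1 + r²)·x) / (K²·(1 + r² − 2rx)²). Then F is monotone increasing on the half-line {x ∈ ℝ : x ≤ 2r/(1+r²)}; that is, for all real x ≤ y ≤ 2r/(1+r²) one has F(x) ≤ F(y). -/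
open Finset

/-- The function `F` whose values `F(cos(2πk/K))` are the diagonal nDFT correlations of
the Wiener phase-noise process is monotone increasing on `(-∞, 2r/(1+r²)]`. -/
theorem stmt_12 (K : ℕ) (hK : 1 ≤ K) (r : ℝ) (hr0 : 0 < r) (hr1 : r < 1)
    (F : ℝ → ℝ)
    (hF : ∀ x : ℝ, F x =
      (1 - r ^ 2) / ((K : ℝ) * (1 + r ^ 2 - 2 * r * x)) +
        2 * r * (1 - r ^ K) * (2 * r - (1 + r ^ 2) * x) /
          ((K : ℝ) ^ 2 * (1 + r ^ 2 - 2 * r * x) ^ 2)) :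
    ∀ x y : ℝ, x ≤ y → y ≤ 2 * r / (1 + r ^ 2) → F x ≤ F y := by
  intro x y hxy hy
  have hKpos : (0 : ℝ) < K := by exact_mod_cast hK
  have ha : 0 < 1 + r ^ 2 := by positivity
  have hb : 0 < 1 - r ^ 2 := by nlinarith
  obtain ⟨c, hc⟩ : ∃ c : ℝ, c = (1 - r ^ K) / K := ⟨_, rfl⟩
  have hKc : 1 - r ^ K = K * c := by rw [hc]; field_simp
  have hc0 : 0 ≤ c := by
    rw [hc]
    exact div_nonneg (sub_nonneg.2 (pow_le_one₀ hr0.le hr1.le)) hKpos.le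
  have hc1 : c ≤ 1 - r := by
    have bernoulli := one_add_mul_le_pow (a := r - 1) (by linarith) K
    rw [add_sub_cancel] at bernoulli
    rw [hc, div_le_iff₀ hKpos]
    linarith
  have hca : c * (1 + r ^ 2) ≤ 1 - r ^ 2 := by
    nlinarith [mul_le_mul_of_nonneg_right hc1 ha.le,
      mul_nonneg (mul_nonneg hr0.le (sub_nonneg.2 hr1.le)) (sub_nonneg.2 hr1.le)]
  rw [le_div_iff₀ ha] at hy
  have hv : (1 - r ^ 2) ^ 2 ≤ (1 + r ^ 2) * (1 + r ^ 2 - 2 * r * y) := by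
    nlinarith [mul_le_mul_of_nonneg_left hy hr0.le]
  have hv0 : 0 < 1 + r ^ 2 - 2 * r * y :=
    pos_of_mul_pos_right (lt_of_lt_of_le (by positivity) hv) ha.le
  have huv : 1 + r ^ 2 - 2 * r * y ≤ 1 + r ^ 2 - 2 * r * x := by
    nlinarith [mul_le_mul_of_nonneg_left hxy hr0.le]
  have hquad : ∀ z : ℝ, 0 < 1 + r ^ 2 - 2 * r * z → F z =
      ((1 - r ^ 2 + c * (1 + r ^ 2)) * (1 + r ^ 2 - 2 * r * z)⁻¹ -
        c * (1 - r ^ 2) ^ 2 * (1 + r ^ 2 - 2 * r * z)⁻¹ ^ 2) / K := by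
    intro z hz
    rw [hF, hKc]
    obtain ⟨u, hu⟩ : ∃ u : ℝ, u = 1 + r ^ 2 - 2 * r * z := ⟨_, rfl⟩
    have hnum : 2 * r * (K * c) * (2 * r - (1 + r ^ 2) * z) =
        K * c * ((1 + r ^ 2) * u - (1 - r ^ 2) ^ 2) := by rw [hu]; ring
    rw [hnum, ← hu]
    rw [← hu] at hz
    field_simp
    ring
  rw [hquad x (hv0.trans_le huv), hquad y hv0]
  refine div_le_div_of_nonneg_right ?_ hKpos.le
  have hst := inv_anti₀ hv0 huv
  have ht : (1 - r ^ 2) ^ 2 * (1 + r ^ 2 - 2 * r * y)⁻¹ ≤ 1 + r ^ 2 := by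
    rwa [← div_eq_mul_inv, div_le_iff₀ hv0]
  generalize (1 + r ^ 2 - 2 * r * x)⁻¹ = s at *
  generalize (1 + r ^ 2 - 2 * r * y)⁻¹ = t at *
  have hs := (mul_le_mul_of_nonneg_left hst (sq_nonneg (1 - r ^ 2))).trans ht
  have hslope : 0 ≤ 1 - r ^ 2 + c * (1 + r ^ 2) - c * (1 - r ^ 2) ^ 2 * (t + s) := by
    nlinarith [mul_le_mul_of_nonneg_left hs hc0, mul_le_mul_of_nonneg_left ht hc0]
  linarith [mul_nonneg (sub_nonneg.2 hst) hslope]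
end

section
/- Let K ≥ 1 be an integer, 0 < r < 1, and let k be an integer. Then the double sum Δ(k) equals F(cos(2πk/K)), where F(x) = (1 − r²) / (K·(1 + r² − 2rx)) + 2r·(1 − r^K)·(2r − (1 + r²)·x) / (K²·(1 + r² − 2rx)²); in particular Δ(k) is a real number. -/
open Complex Finset

/-- The last row of the Toeplitz sum is a geometric sum. -/
lemma sum_pow_natAbs_mul_pow_mul_pow {R : Type*} [Field R] (s z w : R) (hzw : z * w = 1)
    (h1 : 1 - s * z ≠ 0) (N : ℕ) :
    ∑ n ∈ range N, s ^ ((N : ℤ) - (n : ℤ)).natAbs * (z ^ N * w ^ n) =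
      s * z * (1 - (s * z) ^ N) / (1 - s * z) := by
  have hterm : ∀ n ∈ range N, s ^ ((N : ℤ) - (n : ℤ)).natAbs * (z ^ N * w ^ n) =
      s * z * (s * z) ^ (N - 1 - n) := by
    intro n hn
    obtain ⟨d, rfl⟩ := Nat.exists_eq_add_of_lt (mem_range.mp hn)
    have hd : (((n + d + 1 : ℕ) : ℤ) - (n : ℤ)).natAbs = d + 1 := by omega
    have hd' : n + d + 1 - 1 - n = d := by omega
    have hpow : z ^ n * w ^ n = 1 := by rw [← mul_pow, hzw, one_pow]
    rw [hd, hd']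
    linear_combination s ^ (d + 1) * z ^ (d + 1) * hpow
  rw [sum_congr rfl hterm, ← mul_sum, sum_range_reflect (fun j => (s * z) ^ j) N, eq_div_iff h1,
    mul_assoc, geom_sum_mul_neg]

/-- Closed form of the quadratic form of the matrix `s ^ |m - n|` at a geometric vector. -/
lemma sum_sum_pow_natAbs_mul_pow_mul_pow {R : Type*} [Field R] (s z w : R) (hzw : z * w = 1)
    (hz : 1 - s * z ≠ 0) (hw : 1 - s * w ≠ 0) (N : ℕ) :
    ∑ m ∈ range N, ∑ n ∈ range N, s ^ ((m : ℤ) - (n : ℤ)).natAbs * (z ^ m * w ^ n) =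
      N + (s * z * (1 - s * z) * N - s * z * (1 - (s * z) ^ N)) / (1 - s * z) ^ 2 +
        (s * w * (1 - s * w) * N - s * w * (1 - (s * w) ^ N)) / (1 - s * w) ^ 2 := by
  induction N with
  | zero => simp
  | succ N ih =>
    have hcol : ∑ m ∈ range N, s ^ ((m : ℤ) - (N : ℤ)).natAbs * (z ^ m * w ^ N) =
        s * w * (1 - (s * w) ^ N) / (1 - s * w) := by
      rw [← sum_pow_natAbs_mul_pow_mul_pow s w z (by rw [mul_comm, hzw]) hw N]
      refine sum_congr rfl fun m _ => ?_
      rw [mul_comm (z ^ m), ← Int.natAbs_neg, neg_sub]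
    have hpow : z ^ N * w ^ N = 1 := by rw [← mul_pow, hzw, one_pow]
    rw [sum_range_succ, sum_range_succ]
    simp_rw [sum_range_succ _ N]
    rw [sum_add_distrib, ih, hcol, sum_pow_natAbs_mul_pow_mul_pow s z w hzw hz N, hpow, sub_self,
      Int.natAbs_zero, pow_zero, pow_succ (s * z), pow_succ (s * w)]
    push_cast
    generalize s * z = a at *
    generalize s * w = b at *
    field_simp
    ring

/-- The diagonal correlation `Δ(k)` of the nDFT coefficients of the Wiener phase-noise
process equals `F(cos(2πk/K))`; in particular it is a real number. -/
theorem stmt_13 (K : ℕ) (hK : 1 ≤ K) (r : ℝ) (hr0 : 0 < r) (hr1 : r < 1)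
    (Δ : ℤ → ℤ → ℂ)
    (hΔ : ∀ k1 k2 : ℤ, Δ k1 k2 =
      (1 / (K : ℂ) ^ 2) * ∑ m ∈ Finset.range K, ∑ n ∈ Finset.range K,
        (r : ℂ) ^ (((m : ℤ) - (n : ℤ)).natAbs) *
          Complex.exp (-2 * (Real.pi : ℂ) * Complex.I *
            (((k1 * m - k2 * n : ℤ)) : ℂ) / (K : ℂ)))
    (F : ℝ → ℝ)
    (hF : ∀ x : ℝ, F x =
      (1 - r ^ 2) / ((K : ℝ) * (1 + r ^ 2 - 2 * r * x)) +
        2 * r * (1 - r ^ K) * (2 * r - (1 + r ^ 2) * x) /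
          ((K : ℝ) ^ 2 * (1 + r ^ 2 - 2 * r * x) ^ 2))
    (k : ℤ) :
    Δ k k = ((F (Real.cos (2 * Real.pi * (k : ℝ) / (K : ℝ))) : ℝ) : ℂ) := by
  have hK0 : (K : ℂ) ≠ 0 := by exact_mod_cast (by omega : K ≠ 0)
  set t : ℝ := 2 * Real.pi * (k : ℝ) / (K : ℝ) with ht
  have htK : (K : ℂ) * t = k * (2 * Real.pi) := by
    rw [ht]; push_cast; field_simp
  set z : ℂ := exp (-(t * I)) with hz
  set w : ℂ := exp (t * I) with hw
  have hzw : z * w = 1 := by rw [hz, hw, ← Complex.exp_add, neg_add_cancel, Complex.exp_zero]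
  have hwK : w ^ K = 1 := by
    rw [hw, ← Complex.exp_nat_mul, ← mul_assoc, htK, mul_assoc]
    exact Complex.exp_int_mul_two_pi_mul_I k
  have hzK : z ^ K = 1 := by
    have h := congrArg (· ^ K) hzw
    simpa [mul_pow, hwK] using h
  have hcos : ((Real.cos t : ℝ) : ℂ) = (z + w) / 2 := by
    rw [Complex.ofReal_cos, Complex.cos, hz, hw, neg_mul, add_comm]
  have hne : ∀ u : ℂ, ‖u‖ = 1 → 1 - (r : ℂ) * u ≠ 0 := by
    intro u hu h
    have h' := congrArg norm (sub_eq_zero.mp h)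
    rw [norm_mul, hu, norm_one, Complex.norm_real, Real.norm_of_nonneg hr0.le] at h'
    linarith
  have hw1 : 1 - (r : ℂ) * w ≠ 0 := hne w (Complex.norm_exp_ofReal_mul_I t)
  have hz1 : 1 - (r : ℂ) * z ≠ 0 := by
    refine hne z ?_
    have h := Complex.norm_exp_ofReal_mul_I (-t)
    rwa [Complex.ofReal_neg, neg_mul] at h
  have hexp : ∀ m n : ℕ, Complex.exp (-2 * (Real.pi : ℂ) * Complex.I *
      (((k * m - k * n : ℤ)) : ℂ) / (K : ℂ)) = z ^ m * w ^ n := by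
    intro m n
    rw [hz, hw, ← Complex.exp_nat_mul, ← Complex.exp_nat_mul, ← Complex.exp_add]
    congr 1
    rw [ht]
    push_cast
    field_simp
    ring
  have hden : 1 + (r : ℂ) ^ 2 - 2 * r * ((z + w) / 2) = (1 - r * z) * (1 - r * w) := by
    linear_combination (-(r : ℂ) ^ 2) * hzw
  rw [hΔ, hF]
  simp_rw [hexp]
  rw [sum_sum_pow_natAbs_mul_pow_mul_pow _ z w hzw hz1 hw1, mul_pow, mul_pow, hzK, hwK, mul_one]
  push_cast
  rw [← Complex.ofReal_cos, hcos, hden]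
  have hlin : (K : ℂ) + r * z * (1 - r * z) * K / (1 - r * z) ^ 2 +
      r * w * (1 - r * w) * K / (1 - r * w) ^ 2 =
      K * (1 - (r : ℂ) ^ 2) / ((1 - r * z) * (1 - r * w)) := by
    field_simp
    linear_combination (-(r : ℂ) ^ 2) * hzw
  have hconst : (r : ℂ) * z / (1 - r * z) ^ 2 + r * w / (1 - r * w) ^ 2 =
      -(2 * r * (2 * r - (1 + (r : ℂ) ^ 2) * ((z + w) / 2))) /
        ((1 - r * z) * (1 - r * w)) ^ 2 := by
    field_simp
    linear_combination ((r : ℂ) ^ 3 * (z + w) - 4 * r ^ 2) * hzw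
  trans (1 / (K : ℂ) ^ 2) * (K * (1 - (r : ℂ) ^ 2) / ((1 - r * z) * (1 - r * w)) -
      (1 - (r : ℂ) ^ K) * (-(2 * r * (2 * r - (1 + (r : ℂ) ^ 2) * ((z + w) / 2))) /
        ((1 - r * z) * (1 - r * w)) ^ 2))
  · rw [← hlin, ← hconst]
    ring
  · field_simp
    ring
end

section
/- Let K ≥ 1 be an integer and 0 < r < 1. For all integers k, k' satisfying (K/(2π))·arccos(2r/(1+r²)) ≤ |k| ≤ |k'| ≤ K/2, the double sums Δ(k) and Δ(k') are real numbers and Δ(k') ≤ Δ(k); that is, Δ(k) is a decreasing function of |k| on this range. -/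
open Complex Finset

/-- Closed form of the sum of the entries of the `N × N` Toeplitz matrix with entries
`a ^ (m - n)` on and below the diagonal and `b ^ (n - m)` above it. -/
lemma sum_toeplitz_geometric {F : Type*} [Field F] {a b : F} (ha : 1 - a ≠ 0) (hb : 1 - b ≠ 0)
    (N : ℕ) :
    ∑ m ∈ range N, ∑ n ∈ range N, (if n ≤ m then a ^ (m - n) else b ^ (n - m)) =
      N + (N * (a / (1 - a)) - a * (1 - a ^ N) / (1 - a) ^ 2) +
        (N * (b / (1 - b)) - b * (1 - b ^ N) / (1 - b) ^ 2) := by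
  have geom : ∀ {x : F}, 1 - x ≠ 0 → ∀ N : ℕ,
      ∑ n ∈ range N, x ^ (N - n) = x * (1 - x ^ N) / (1 - x) := by
    intro x hx N
    induction N with
    | zero => simp
    | succ N ih =>
      have : ∀ n ∈ range N, x ^ (N + 1 - n) = x * x ^ (N - n) := fun n hn => by
        rw [Nat.succ_sub (mem_range.1 hn).le, pow_succ']
      rw [sum_range_succ, sum_congr rfl this, ← mul_sum, ih]
      simp only [Nat.add_sub_cancel_left, pow_one]
      field_simp
      ring
  induction N with
  | zero => simp
  | succ N ih =>
    have lower : ∑ n ∈ range N, (if n ≤ N then a ^ (N - n) else b ^ (n - N)) =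
        ∑ n ∈ range N, a ^ (N - n) :=
      sum_congr rfl fun n hn => if_pos (mem_range.1 hn).le
    have upper : ∑ m ∈ range N, (if N ≤ m then a ^ (m - N) else b ^ (N - m)) =
        ∑ m ∈ range N, b ^ (N - m) :=
      sum_congr rfl fun m hm => if_neg (mem_range.1 hm).not_ge
    rw [sum_range_succ]
    simp only [sum_range_succ _ N]
    rw [sum_add_distrib, ih, lower, upper, geom ha, geom hb]
    simp only [le_refl, if_true, Nat.sub_self, pow_zero]
    push_cast
    field_simp
    ring

/-- The diagonal correlation sum equals a quadratic polynomial in `1 / (1 - 2 r cos φ + r²)`,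
where `φ = 2πk/K`. -/
lemma diagonal_correlation_sum (K : ℕ) (hK : 1 ≤ K) {r : ℝ} (hr0 : 0 < r) (hr1 : r < 1) (k : ℤ) :
    ∑ m ∈ range K, ∑ n ∈ range K,
        (r : ℂ) ^ (((m : ℤ) - (n : ℤ)).natAbs) *
          Complex.exp (-2 * (Real.pi : ℂ) * Complex.I *
            (((k * m - k * n : ℤ)) : ℂ) / (K : ℂ)) =
      (((K * (1 - r ^ 2) + (1 - r ^ K) * (1 + r ^ 2)) *
          (1 - 2 * r * Real.cos (2 * Real.pi * k / K) + r ^ 2)⁻¹ -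
        (1 - r ^ K) * (1 - r ^ 2) ^ 2 *
          ((1 - 2 * r * Real.cos (2 * Real.pi * k / K) + r ^ 2)⁻¹) ^ 2 : ℝ) : ℂ) := by
  have hK0 : (K : ℂ) ≠ 0 := by exact_mod_cast (by omega : K ≠ 0)
  set φ : ℝ := 2 * Real.pi * k / K with hφ
  have hφc : (φ : ℂ) = 2 * Real.pi * k / K := by rw [hφ]; push_cast; rfl
  set a : ℂ := r * exp (-(φ * I)) with ha
  set b : ℂ := r * exp (φ * I) with hb
  have norm_b : ‖b‖ = r := by
    rw [hb, norm_mul, norm_exp_ofReal_mul_I, mul_one, norm_real, Real.norm_of_nonneg hr0.le]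
  have norm_a : ‖a‖ = r := by
    rw [ha, norm_mul, ← neg_mul, ← ofReal_neg, norm_exp_ofReal_mul_I, mul_one, norm_real,
      Real.norm_of_nonneg hr0.le]
  have ne_one : ∀ x : ℂ, ‖x‖ = r → 1 - x ≠ 0 := fun x hx h => by
    rw [← sub_eq_zero.1 h, norm_one] at hx
    exact hr1.ne hx.symm
  have ha1 := ne_one a norm_a
  have hb1 := ne_one b norm_b
  have hab : a * b = (r : ℂ) ^ 2 := by
    have : exp (-(φ * I)) * exp (φ * I) = 1 := by rw [← exp_add]; simp
    rw [ha, hb]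
    linear_combination (r : ℂ) ^ 2 * this
  have hadd : a + b = 2 * r * Real.cos φ := by
    rw [ofReal_cos, Complex.cos, ha, hb, neg_mul]
    ring
  have hbK : b ^ K = (r : ℂ) ^ K := by
    rw [hb, mul_pow, ← exp_nat_mul, hφc,
      show (K : ℂ) * (2 * Real.pi * k / K * I) = k * (2 * Real.pi * I) by field_simp,
      exp_int_mul_two_pi_mul_I, mul_one]
  have haK : a ^ K = (r : ℂ) ^ K := by
    rw [ha, mul_pow, ← exp_nat_mul, hφc,
      show (K : ℂ) * (-(2 * Real.pi * k / K * I)) = (-k : ℤ) * (2 * Real.pi * I) by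
        push_cast; field_simp,
      exp_int_mul_two_pi_mul_I, mul_one]
  have entry : ∀ m n : ℕ, (r : ℂ) ^ (((m : ℤ) - (n : ℤ)).natAbs) *
      exp (-2 * (Real.pi : ℂ) * I * (((k * m - k * n : ℤ)) : ℂ) / (K : ℂ)) =
      if n ≤ m then a ^ (m - n) else b ^ (n - m) := by
    intro m n
    split_ifs with h
    · rw [show ((m : ℤ) - n).natAbs = m - n by omega, ha, mul_pow, ← exp_nat_mul, hφc]
      push_cast [h]
      congr 2
      ring
    · have h' : m ≤ n := by omega
      rw [show ((m : ℤ) - n).natAbs = n - m by omega, hb, mul_pow, ← exp_nat_mul, hφc]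
      push_cast [h']
      congr 2
      ring
  have denom : 1 - 2 * (r : ℂ) * Real.cos φ + (r : ℂ) ^ 2 = (1 - a) * (1 - b) := by
    linear_combination hadd - hab
  simp only [entry]
  rw [sum_toeplitz_geometric ha1 hb1, haK, hbK]
  push_cast [-ofReal_cos]
  rw [denom, ← hab]
  field_simp
  ring

/-- The polynomial of `diagonal_correlation_sum` is monotone up to the threshold. -/
lemma quadratic_le_quadratic {K : ℕ} {r u v : ℝ} (hr0 : 0 < r) (hr1 : r < 1)
    (huv : u ≤ v) (hv : (1 - r ^ 2) ^ 2 * v ≤ 1 + r ^ 2) :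
    (K * (1 - r ^ 2) + (1 - r ^ K) * (1 + r ^ 2)) * u - (1 - r ^ K) * (1 - r ^ 2) ^ 2 * u ^ 2 ≤
      (K * (1 - r ^ 2) + (1 - r ^ K) * (1 + r ^ 2)) * v -
        (1 - r ^ K) * (1 - r ^ 2) ^ 2 * v ^ 2 := by
  have hp : 0 ≤ 1 - r ^ K := sub_nonneg.2 (pow_le_one₀ hr0.le hr1.le)
  have hu : (1 - r ^ 2) ^ 2 * u ≤ 1 + r ^ 2 :=
    (mul_le_mul_of_nonneg_left huv (sq_nonneg _)).trans hv
  have bernoulli : 1 - r ^ K ≤ K * (1 - r) := by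
    have := one_add_mul_le_pow (a := r - 1) (by linarith) K
    rw [add_sub_cancel] at this
    linarith
  have key : (1 - r ^ K) * (1 + r ^ 2) ≤ K * (1 - r ^ 2) := by
    calc (1 - r ^ K) * (1 + r ^ 2) ≤ K * (1 - r) * (1 + r) :=
          mul_le_mul bernoulli (by nlinarith) (by positivity) (hp.trans bernoulli)
      _ = K * (1 - r ^ 2) := by ring
  have hsum := mul_le_mul_of_nonneg_left (add_le_add hu hv) hp
  have := mul_nonneg (sub_nonneg.2 huv)
    (show 0 ≤ K * (1 - r ^ 2) + (1 - r ^ K) * (1 + r ^ 2) -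
      (1 - r ^ K) * ((1 - r ^ 2) ^ 2 * u + (1 - r ^ 2) ^ 2 * v) by linarith)
  linarith

/-- On the range `(K/2π)·arccos(2r/(1+r²)) ≤ |k| ≤ |k'| ≤ K/2`, the diagonal nDFT
correlations `Δ(k)` of the Wiener phase-noise process are real and decreasing in `|k|`. -/
theorem stmt_14 (K : ℕ) (hK : 1 ≤ K) (r : ℝ) (hr0 : 0 < r) (hr1 : r < 1)
    (Δ : ℤ → ℤ → ℂ)
    (hΔ : ∀ k1 k2 : ℤ, Δ k1 k2 =
      (1 / (K : ℂ) ^ 2) * ∑ m ∈ Finset.range K, ∑ n ∈ Finset.range K,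
        (r : ℂ) ^ (((m : ℤ) - (n : ℤ)).natAbs) *
          Complex.exp (-2 * (Real.pi : ℂ) * Complex.I *
            (((k1 * m - k2 * n : ℤ)) : ℂ) / (K : ℂ)))
    (k k' : ℤ)
    (h1 : ((K : ℝ) / (2 * Real.pi)) * Real.arccos (2 * r / (1 + r ^ 2)) ≤ ((|k| : ℤ) : ℝ))
    (h2 : ((|k| : ℤ) : ℝ) ≤ ((|k'| : ℤ) : ℝ))
    (h3 : ((|k'| : ℤ) : ℝ) ≤ (K : ℝ) / 2) :
    (Δ k k).im = 0 ∧ (Δ k' k').im = 0 ∧ (Δ k' k').re ≤ (Δ k k).re := by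
  have hKpos : (0 : ℝ) < K := by exact_mod_cast hK
  have hpi := Real.pi_pos
  have hscale : (1 / (K : ℂ) ^ 2) = ((1 / (K : ℝ) ^ 2 : ℝ) : ℂ) := by push_cast; rfl
  rw [hΔ k k, hΔ k' k', diagonal_correlation_sum K hK hr0 hr1 k,
    diagonal_correlation_sum K hK hr0 hr1 k', hscale, ← ofReal_mul, ← ofReal_mul]
  refine ⟨ofReal_im _, ofReal_im _, ?_⟩
  rw [ofReal_re, ofReal_re]
  refine mul_le_mul_of_nonneg_left ?_ (by positivity)
  have cos_abs_index : ∀ j : ℤ, Real.cos (2 * Real.pi * j / K) =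
      Real.cos (2 * Real.pi * (|j| : ℤ) / K) := fun j => by
    rw [← Real.cos_abs, abs_div, abs_mul, abs_of_pos hKpos, abs_of_pos Real.two_pi_pos,
      Int.cast_abs]
  have hle_pi : 2 * Real.pi * (|k'| : ℤ) / K ≤ Real.pi := by
    rw [div_le_iff₀ hKpos]
    nlinarith
  have hangle : 2 * Real.pi * (|k| : ℤ) / K ≤ 2 * Real.pi * (|k'| : ℤ) / K := by gcongr
  have hnonneg : 0 ≤ 2 * Real.pi * ((|k| : ℤ) : ℝ) / K := by
    have : (0 : ℝ) ≤ (|k| : ℤ) := by exact_mod_cast abs_nonneg k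
    positivity
  have hcos : Real.cos (2 * Real.pi * k' / K) ≤ Real.cos (2 * Real.pi * k / K) := by
    rw [cos_abs_index k, cos_abs_index k']
    exact Real.cos_le_cos_of_nonneg_of_le_pi hnonneg hle_pi hangle
  have hthreshold : Real.cos (2 * Real.pi * k / K) ≤ 2 * r / (1 + r ^ 2) := by
    have harccos : Real.arccos (2 * r / (1 + r ^ 2)) ≤ 2 * Real.pi * (|k| : ℤ) / K := by
      rw [le_div_iff₀ hKpos]
      rw [div_mul_eq_mul_div, div_le_iff₀ Real.two_pi_pos] at h1
      linarith
    rw [cos_abs_index k, ← Real.cos_arccos (x := 2 * r / (1 + r ^ 2))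
      ((by norm_num : (-1 : ℝ) ≤ 0).trans (by positivity))
      ((div_le_one (by positivity)).2 (by nlinarith [sq_nonneg (1 - r)]))]
    exact Real.cos_le_cos_of_nonneg_of_le_pi (Real.arccos_nonneg _) (hangle.trans hle_pi) harccos
  have hpos : 0 < 1 - 2 * r * Real.cos (2 * Real.pi * k / K) + r ^ 2 := by
    nlinarith [Real.cos_le_one (2 * Real.pi * k / K)]
  refine quadratic_le_quadratic hr0 hr1 (inv_anti₀ hpos (by nlinarith)) ?_
  rw [← div_eq_mul_inv, div_le_iff₀ hpos]
  rw [le_div_iff₀ (by positivity)] at hthreshold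
  nlinarith
end

section
/- Let E_s > 0, A0 > 0, A1 ≥ 0, A2 ≥ 0 be real numbers with A1 + A2·E_s > 0, and define f : ℝ → ℝ by f(x) = x·(E_s − x) / (A0 + A1·x + A2·x²). Set x* = (−A0 + √(A0² + A0·E_s·(A1 + A2·E_s))) / (A1 + A2·E_s). Then 0 < x* < E_s, x* satisfies (A1 + A2·E_s)·x*² + 2·A0·x* − A0·E_s = 0, and f has derivative 0 at x* (i.e., HasDerivAt f 0 x*). -/
/-- The claimed reference-signal power allocation `x* = E_r^statn` lies strictly between
`0` and `E_s`, solves `(A1+A2·E_s)x² + 2A0·x − A0·E_s = 0`, and is a stationary point of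
`f(x) = x(E_s − x)/(A0 + A1x + A2x²)`. -/
theorem stmt_15 (Es A0 A1 A2 : ℝ) (hEs : 0 < Es) (hA0 : 0 < A0)
    (hA1 : 0 ≤ A1) (hA2 : 0 ≤ A2) (hden : 0 < A1 + A2 * Es)
    (f : ℝ → ℝ)
    (hf : ∀ x : ℝ, f x = x * (Es - x) / (A0 + A1 * x + A2 * x ^ 2))
    (xs : ℝ)
    (hxs : xs = (-A0 + Real.sqrt (A0 ^ 2 + A0 * Es * (A1 + A2 * Es))) / (A1 + A2 * Es)) :
    0 < xs ∧ xs < Es ∧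
    (A1 + A2 * Es) * xs ^ 2 + 2 * A0 * xs - A0 * Es = 0 ∧
    HasDerivAt f 0 xs := by
  have hprod : 0 < A0 * Es * (A1 + A2 * Es) := by positivity
  have hsqrt := Real.sq_sqrt (add_nonneg (sq_nonneg A0) hprod.le)
  have hlt : A0 < Real.sqrt (A0 ^ 2 + A0 * Es * (A1 + A2 * Es)) :=
    Real.lt_sqrt_of_sq_lt (by linarith)
  have hpos : 0 < xs := by
    rw [hxs]
    exact div_pos (by linarith) hden
  have hlin : (A1 + A2 * Es) * xs + A0 = Real.sqrt (A0 ^ 2 + A0 * Es * (A1 + A2 * Es)) := by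
    rw [hxs, mul_div_cancel₀ _ hden.ne']
    ring
  have hquad : (A1 + A2 * Es) * xs ^ 2 + 2 * A0 * xs - A0 * Es = 0 := by
    rw [← hlin] at hsqrt
    refine (mul_eq_zero.mp ?_).resolve_left hden.ne'
    linear_combination hsqrt
  refine ⟨hpos, ?_, hquad, ?_⟩
  · have hsq : 0 < (A1 + A2 * Es) * xs ^ 2 := by positivity
    have hA0xs : 0 < A0 * xs := by positivity
    exact lt_of_mul_lt_mul_left (by linarith) hA0.le
  · have hne : A0 + A1 * xs + A2 * xs ^ 2 ≠ 0 := by positivity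
    have hnum : HasDerivAt (fun x : ℝ => x * (Es - x)) (1 * (Es - xs) + xs * (-1)) xs :=
      (hasDerivAt_id' xs).mul ((hasDerivAt_id' xs).const_sub Es)
    have hdenom : HasDerivAt (fun x : ℝ => A0 + A1 * x + A2 * x ^ 2)
        (A1 * 1 + A2 * ((2 : ℕ) * xs ^ (2 - 1))) xs :=
      (((hasDerivAt_id' xs).const_mul A1).const_add A0).add
        ((hasDerivAt_pow 2 xs).const_mul A2)
    rw [funext hf]
    refine (hnum.fun_div hdenom hne).congr_deriv ?_
    rw [div_eq_zero_iff]
    left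
    push_cast
    linear_combination -hquad
end
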